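/- Let ψ be an n-qubit stabilizer state with independent generating set s_1, g_2, …, g_n of 𝒮(ψ) such that Z_1 anticommutes with s_1 and commutes with each g_i (i ≥ 2), let 𝒢 be the group generated by {g_2,…,g_n}, and let φ = T_1ψ. Let M ∈ 𝒫_n be Hermitian, let m ∈ {+1,−1}, let Π = (I + mM)/2, and suppose Πφ ≠ 0. Then the normalized post-measurement state Πφ/‖Πφ‖ is a stabilizer state if and only if there exists g ∈ 𝒢 such that M = ±Z_1·g, or M = ±s_1·g, or M = ±i·s_1·Z_1·g. -/

import Mathlib

noncomputable section
namespace PaperFormal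

open Matrix

/-- The space of `n`-qubit operators: matrices indexed by computational basis states. -/
abbrev QMat (n : ℕ) := Matrix (Fin n → Fin 2) (Fin n → Fin 2) ℂ

/-- The space of `n`-qubit state vectors. -/
abbrev QVec (n : ℕ) := (Fin n → Fin 2) → ℂ

def σI : Matrix (Fin 2) (Fin 2) ℂ := 1
def σX : Matrix (Fin 2) (Fin 2) ℂ := !![0, 1; 1, 0]
def σY : Matrix (Fin 2) (Fin 2) ℂ := !![0, -Complex.I; Complex.I, 0]
def σZ : Matrix (Fin 2) (Fin 2) ℂ := !![1, 0; 0, -1]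

def IsPauliFactor (m : Matrix (Fin 2) (Fin 2) ℂ) : Prop :=
  m = σI ∨ m = σX ∨ m = σY ∨ m = σZ

/-- Kronecker product over `n` qubits of single-qubit matrices. -/
def kron {n : ℕ} (σ : Fin n → Matrix (Fin 2) (Fin 2) ℂ) : QMat n :=
  fun v w => ∏ j, σ j (v j) (w j)

/-- Membership in the `n`-qubit Pauli group `𝒫_n`:
`M = i^k σ_1 ⊗ ⋯ ⊗ σ_n` with each `σ_j ∈ {I, X, Y, Z}`. -/
def IsPauli {n : ℕ} (M : QMat n) : Prop :=
  ∃ (k : Fin 4) (σ : Fin n → Matrix (Fin 2) (Fin 2) ℂ),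
    (∀ j, IsPauliFactor (σ j)) ∧ M = Complex.I ^ (k : ℕ) • kron σ

/-- A Pauli operator supported on the set `A` of qubits (identity factors outside `A`). -/
def PauliSupportedOn {n : ℕ} (M : QMat n) (A : Set (Fin n)) : Prop :=
  ∃ (k : Fin 4) (σ : Fin n → Matrix (Fin 2) (Fin 2) ℂ),
    (∀ j, IsPauliFactor (σ j)) ∧ (∀ j, j ∉ A → σ j = σI) ∧
    M = Complex.I ^ (k : ℕ) • kron σ

/-- The Pauli `M` has identity (`j`-th Kronecker factor proportional to identity) at qubit `j`. -/
def PauliTrivialAt {n : ℕ} (M : QMat n) (j : Fin n) : Prop :=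
  PauliSupportedOn M {i | i ≠ j}

/-- The single-qubit operator `m` placed at qubit `j` (identity elsewhere). -/
def opAt {n : ℕ} (j : Fin n) (m : Matrix (Fin 2) (Fin 2) ℂ) : QMat n :=
  kron (fun i => if i = j then m else σI)

/-- Inner product `⟨φ, ψ⟩` (antilinear in the first argument). -/
def innerC {n : ℕ} (φ ψ : QVec n) : ℂ := ∑ v, (starRingEnd ℂ) (φ v) * ψ v

/-- Squared norm `‖ψ‖²`. -/
def nrmSq {n : ℕ} (ψ : QVec n) : ℝ := ∑ v, Complex.normSq (ψ v)

/-- The stabilizer group `𝒮(ψ) = {P ∈ 𝒫_n : Pψ = ψ}`. -/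
def stabGroup {n : ℕ} (ψ : QVec n) : Set (QMat n) :=
  {P | IsPauli P ∧ P.mulVec ψ = ψ}

/-- An `n`-qubit pure stabilizer state: a unit vector whose stabilizer group has `2^n` elements. -/
def IsStabState {n : ℕ} (ψ : QVec n) : Prop :=
  nrmSq ψ = 1 ∧ (stabGroup ψ).ncard = 2 ^ n

/-- The product `∏ i, g i ^ α i` (in the fixed order of indices). -/
def prodPow {n m : ℕ} (g : Fin m → QMat n) (α : Fin m → ZMod 2) : QMat n :=
  (List.ofFn fun i => g i ^ (α i).val).prod

/-- `g` is an independent generating set of `𝒮(ψ)`: the map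
`(α_i) ↦ ∏ g_i^{α_i}` is a bijection from `(ℤ/2)^m` onto `𝒮(ψ)`. -/
def IsIndepGenSet {n m : ℕ} (ψ : QVec n) (g : Fin m → QMat n) : Prop :=
  (∀ i, g i ∈ stabGroup ψ) ∧ Function.Injective (prodPow g) ∧
    Set.range (prodPow g) = stabGroup ψ

/-- The `T` gate `diag(1, e^{iπ/4})`. -/
def Tgate : Matrix (Fin 2) (Fin 2) ℂ :=
  !![1, 0; 0, Complex.exp (Real.pi * Complex.I / 4)]

/-!
By Parseval's identity for Pauli expectations, a nonzero vector is proportional to a stabilizer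
state iff every Pauli either has vanishing expectation in it or has it as an eigenvector. Call this
the dichotomy. The vectors fixed by `𝒢` form a one-qubit code with logical Paulis `Z₁`, `s₁` and
`i s₁ Z₁`; it contains `φ`, which violates the dichotomy at `s₁`.

If the measured Pauli `M` anticommutes with some `g ∈ 𝒢`, the projection acts on `φ` as `1/√2` times
a Clifford unitary, so it leaves a nonstabilizer state. Otherwise `M` is, up to a phase and an
element of `𝒢`, a logical Pauli of the code: the identity leaves `φ` unchanged, and a nontrivial one
projects onto a logical eigenstate, for which the dichotomy holds.
-/

section Matrix

variable {ι : Type*} [Fintype ι]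

lemma pow_mulVec_eq_pow_smul {R : Type*} [CommSemiring R] [DecidableEq ι] {A : Matrix ι ι R}
    {x : ι → R} {c : R} (h : A *ᵥ x = c • x) (k : ℕ) : (A ^ k) *ᵥ x = c ^ k • x := by
  induction k with
  | zero => simp only [pow_zero, one_mulVec, one_smul]
  | succ k ih => rw [pow_succ, ← mulVec_mulVec, h, mulVec_smul, ih, smul_smul, pow_succ']

lemma pow_eq_one_of_mulVec_eq_smul {K : Type*} [Field K] [DecidableEq ι] {A : Matrix ι ι K}
    {k : ℕ} (hA : A ^ k = 1) {x : ι → K} (hx : x ≠ 0) {c : K} (h : A *ᵥ x = c • x) :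
    c ^ k = 1 := by
  have hk := pow_mulVec_eq_pow_smul h k
  rw [hA, one_mulVec] at hk
  exact smul_left_injective K hx (by simpa only [one_smul] using hk.symm)

lemma dotProduct_mulVec_eq_zero_of_anticommute [DecidableEq ι] {A R : Matrix ι ι ℂ}
    (hR : Rᴴ * R = 1) (h : A * R = -(R * A)) {x y : ι → ℂ} {c : ℂ} (hx : R *ᵥ x = c • x)
    (hy : R *ᵥ y = c • y) : star x ⬝ᵥ A *ᵥ y = 0 := by
  have hneg : star x ⬝ᵥ A *ᵥ y = -(star c * c * (star x ⬝ᵥ A *ᵥ y)) := by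
    calc star x ⬝ᵥ A *ᵥ y = star (R *ᵥ x) ⬝ᵥ R *ᵥ A *ᵥ y := by
          rw [star_mulVec, ← dotProduct_mulVec, mulVec_mulVec, hR, one_mulVec]
      _ = -(star (R *ᵥ x) ⬝ᵥ A *ᵥ R *ᵥ y) := by
          rw [mulVec_mulVec _ A R, h, neg_mulVec, dotProduct_neg, neg_neg, mulVec_mulVec]
      _ = -(star c * c * (star x ⬝ᵥ A *ᵥ y)) := by
          rw [hx, hy, star_smul, smul_dotProduct, mulVec_smul, dotProduct_smul, smul_smul,
            smul_eq_mul]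
  have hc : (1 + star c * c : ℂ) ≠ 0 := by
    rw [Complex.star_def, ← Complex.normSq_eq_conj_mul_self]
    exact_mod_cast (add_pos_of_pos_of_nonneg one_pos (Complex.normSq_nonneg c)).ne'
  exact (mul_eq_zero.1 (by linear_combination hneg : (1 + star c * c) * _ = 0)).resolve_left hc

open scoped ComplexOrder in
lemma star_dotProduct_self_ne_zero {x : ι → ℂ} (hx : x ≠ 0) : star x ⬝ᵥ x ≠ 0 :=
  dotProduct_star_self_eq_zero.not.2 hx

end Matrix

section PauliStrings

/-- The single-qubit Paulis `I, X, Y, Z`, numbered `0, 1, 2, 3` so that, up to phase,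
multiplication is bitwise exclusive or. -/
def pauliFactor (t : Fin 4) : Matrix (Fin 2) (Fin 2) ℂ := ![σI, σX, σY, σZ] t

lemma isPauliFactor_iff {m : Matrix (Fin 2) (Fin 2) ℂ} :
    IsPauliFactor m ↔ ∃ t, m = pauliFactor t := by
  simp only [IsPauliFactor, pauliFactor, Fin.exists_fin_succ]
  simp

lemma isHermitian_pauliFactor (t : Fin 4) : (pauliFactor t).IsHermitian := by
  ext a b
  fin_cases t <;> fin_cases a <;> fin_cases b <;> simp [pauliFactor, σI, σX, σY, σZ]

lemma pauliFactor_mul_self (t : Fin 4) : pauliFactor t * pauliFactor t = 1 := by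
  fin_cases t <;> simp [pauliFactor, σI, σX, σY, σZ, one_fin_two]

lemma exists_pauliFactor_mul (s t : Fin 4) :
    ∃ c : ℂ, c ^ 4 = 1 ∧ pauliFactor s * pauliFactor t = c • pauliFactor (s ^^^ t) := by
  fin_cases s <;> fin_cases t <;>
    first
    | refine ⟨1, one_pow 4, ?_⟩; simp [pauliFactor, σI, σX, σY, σZ, one_fin_two]; done
    | refine ⟨Complex.I, Complex.I_pow_four, ?_⟩; simp [pauliFactor, σX, σY, σZ]; done
    | refine ⟨-Complex.I, (Even.neg_pow (by decide) _).trans Complex.I_pow_four, ?_⟩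
      simp [pauliFactor, σX, σY, σZ]

lemma sum_pauliFactor_apply_mul_apply (a b c d : Fin 2) :
    ∑ t, pauliFactor t a b * pauliFactor t c d = if a = d ∧ b = c then 2 else 0 := by
  fin_cases a <;> fin_cases b <;> fin_cases c <;> fin_cases d <;>
    simp [Fin.sum_univ_four, pauliFactor, σI, σX, σY, σZ] <;> norm_num

variable {n : ℕ}

lemma kron_mul (σ τ : Fin n → Matrix (Fin 2) (Fin 2) ℂ) :
    kron σ * kron τ = kron fun j => σ j * τ j := by
  ext v w
  simp only [mul_apply, kron, ← Finset.prod_mul_distrib]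
  rw [Finset.prod_univ_sum, Fintype.piFinset_univ]

lemma kron_smul (c : Fin n → ℂ) (σ : Fin n → Matrix (Fin 2) (Fin 2) ℂ) :
    (kron fun j => c j • σ j) = (∏ j, c j) • kron σ := by
  ext v w
  simp only [kron, Matrix.smul_apply, smul_eq_mul, Finset.prod_mul_distrib]

lemma kron_one : kron (fun _ : Fin n => (1 : Matrix (Fin 2) (Fin 2) ℂ)) = 1 := by
  ext v w
  simp only [kron, one_apply, Finset.prod_ite_zero, Finset.prod_const_one, funext_iff,
    Finset.mem_univ, true_imp_iff]

lemma conjTranspose_kron (σ : Fin n → Matrix (Fin 2) (Fin 2) ℂ) :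
    (kron σ)ᴴ = kron fun j => (σ j)ᴴ := by
  ext v w
  simp only [conjTranspose_apply, kron, star_prod]

/-- The phase-free `n`-qubit Pauli whose Kronecker factors are numbered by `t`. -/
def pauliString (t : Fin n → Fin 4) : QMat n := kron fun j => pauliFactor (t j)

lemma isHermitian_pauliString (t : Fin n → Fin 4) : (pauliString t).IsHermitian := by
  simp only [IsHermitian, pauliString, conjTranspose_kron, (isHermitian_pauliFactor _).eq]

lemma pauliString_mul_self (t : Fin n → Fin 4) : pauliString t * pauliString t = 1 := by
  simp only [pauliString, kron_mul, pauliFactor_mul_self, kron_one]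

lemma exists_pauliString_mul (s t : Fin n → Fin 4) :
    ∃ c : ℂ, c ^ 4 = 1 ∧
      pauliString s * pauliString t = c • pauliString fun j => s j ^^^ t j := by
  choose c hc h using fun j => exists_pauliFactor_mul (s j) (t j)
  refine ⟨∏ j, c j, ?_, ?_⟩
  · simp only [← Finset.prod_pow, hc, Finset.prod_const_one]
  · simp only [pauliString, kron_mul, h, kron_smul]

lemma sum_pauliString_apply_mul_apply (a b c d : Fin n → Fin 2) :
    ∑ t : Fin n → Fin 4, pauliString t a b * pauliString t c d
      = if a = d ∧ b = c then 2 ^ n else 0 := by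
  simp only [pauliString, kron, ← Finset.prod_mul_distrib]
  rw [← Fintype.piFinset_univ, ← Finset.prod_univ_sum
    (f := fun j t => pauliFactor t (a j) (b j) * pauliFactor t (c j) (d j))]
  simp only [sum_pauliFactor_apply_mul_apply, Finset.prod_ite_zero, Finset.prod_const,
    Finset.card_univ, Fintype.card_fin, funext_iff, Finset.mem_univ, true_imp_iff, forall_and]

lemma sum_trace_mul_smul_pauliString (A : QMat n) :
    ∑ t : Fin n → Fin 4, trace (pauliString t * A) • pauliString t = (2 ^ n : ℂ) • A := by
  ext c d
  have expand (t : Fin n → Fin 4) : trace (pauliString t * A) * pauliString t c d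
      = ∑ a, ∑ b, A b a * (pauliString t a b * pauliString t c d) := by
    simp only [trace, diag_apply, mul_apply, Finset.sum_mul]
    exact Finset.sum_congr rfl fun a _ => Finset.sum_congr rfl fun b _ => by ring
  simp only [Matrix.sum_apply, Matrix.smul_apply, smul_eq_mul, expand]
  rw [Finset.sum_comm]
  simp only [Finset.sum_comm (s := (Finset.univ : Finset (Fin n → Fin 4))), ← Finset.mul_sum,
    sum_pauliString_apply_mul_apply, ite_and, mul_ite, mul_zero, Finset.sum_ite_irrel,
    Finset.sum_const_zero, Finset.sum_ite_eq', Finset.mem_univ, if_true]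
  exact mul_comm _ _

lemma linearIndependent_pauliString : LinearIndependent ℂ (pauliString (n := n)) := by
  refine linearIndependent_of_top_le_span_of_card_eq_finrank (fun A _ => ?_) ?_
  · have hA : A = (2 ^ n : ℂ)⁻¹ • ∑ t, trace (pauliString t * A) • pauliString t := by
      rw [sum_trace_mul_smul_pauliString, inv_smul_smul₀ (pow_ne_zero n two_ne_zero)]
    rw [hA]
    exact Submodule.smul_mem _ _ <| Submodule.sum_mem _ fun t _ =>
      Submodule.smul_mem _ _ (Submodule.subset_span ⟨t, rfl⟩)
  · simp [Module.finrank_matrix, ← mul_pow]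

lemma sum_expectation_mul_expectation (x y : QVec n) :
    ∑ t : Fin n → Fin 4, (star x ⬝ᵥ pauliString t *ᵥ x) * (star y ⬝ᵥ pauliString t *ᵥ y)
      = 2 ^ n * ((star y ⬝ᵥ x) * (star x ⬝ᵥ y)) := by
  have h := congrArg (fun A => star y ⬝ᵥ A *ᵥ y)
    (sum_trace_mul_smul_pauliString (vecMulVec x (star x)))
  simp only [mul_vecMulVec, trace_vecMulVec, sum_mulVec, dotProduct_sum, smul_mulVec,
    dotProduct_smul, vecMulVec_mulVec, smul_eq_mul] at h
  simpa [dotProduct_comm _ (star x), mul_comm, mul_assoc] using h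

end PauliStrings

section PauliGroup

variable {n : ℕ} {P R : QMat n}

lemma isPauli_iff :
    IsPauli P ↔ ∃ c : ℂ, c ^ 4 = 1 ∧ ∃ t : Fin n → Fin 4, P = c • pauliString t := by
  constructor
  · rintro ⟨k, σ, hσ, rfl⟩
    choose t ht using fun j => isPauliFactor_iff.1 (hσ j)
    exact ⟨Complex.I ^ (k : ℕ), by rw [← pow_mul', pow_mul, Complex.I_pow_four, one_pow], t,
      by rw [pauliString, funext ht]⟩
  · rintro ⟨c, hc, t, rfl⟩
    obtain ⟨k, hk, rfl⟩ := Complex.isPrimitiveRoot_I.eq_pow_of_pow_eq_one hc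
    exact ⟨⟨k, hk⟩, _, fun j => isPauliFactor_iff.2 ⟨t j, rfl⟩, rfl⟩

lemma isPauli_pauliString (t : Fin n → Fin 4) : IsPauli (pauliString t) :=
  isPauli_iff.2 ⟨1, one_pow 4, t, (one_smul ℂ _).symm⟩

lemma isPauli_kron {σ : Fin n → Matrix (Fin 2) (Fin 2) ℂ} (hσ : ∀ j, IsPauliFactor (σ j)) :
    IsPauli (kron σ) :=
  ⟨0, σ, hσ, (one_smul ℂ _).symm⟩

lemma isPauli_one : IsPauli (1 : QMat n) := by
  rw [← kron_one]
  exact isPauli_kron fun _ => Or.inl rfl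

lemma IsPauli.smul (hP : IsPauli P) {c : ℂ} (hc : c ^ 4 = 1) : IsPauli (c • P) := by
  obtain ⟨d, hd, t, rfl⟩ := isPauli_iff.1 hP
  exact isPauli_iff.2 ⟨c * d, by rw [mul_pow, hc, hd, one_mul], t, smul_smul c d _⟩

lemma IsPauli.mul (hP : IsPauli P) (hR : IsPauli R) : IsPauli (P * R) := by
  obtain ⟨a, ha, s, rfl⟩ := isPauli_iff.1 hP
  obtain ⟨b, hb, t, rfl⟩ := isPauli_iff.1 hR
  obtain ⟨c, hc, hst⟩ := exists_pauliString_mul s t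
  rw [smul_mul_smul_comm, hst]
  exact ((isPauli_pauliString _).smul hc).smul (by rw [mul_pow, ha, hb, one_mul])

lemma sq_eq_one_or_neg_one_of_pow_four {K : Type*} [Field K] {c : K} (hc : c ^ 4 = 1) :
    c ^ 2 = 1 ∨ c ^ 2 = -1 :=
  sq_eq_one_iff.1 (by rw [← pow_mul, hc])

lemma star_mul_self_of_pow_four {c : ℂ} (hc : c ^ 4 = 1) : star c * c = 1 := by
  rw [Complex.star_def, Complex.conj_mul', Complex.norm_eq_one_of_pow_eq_one hc four_ne_zero]
  norm_num

lemma pauliString_commute_or_anticommute (s t : Fin n → Fin 4) :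
    Commute (pauliString s) (pauliString t) ∨
      pauliString s * pauliString t = -(pauliString t * pauliString s) := by
  obtain ⟨c, hc, hst⟩ := exists_pauliString_mul s t
  have hts : pauliString t * pauliString s = star c • pauliString fun j => s j ^^^ t j := by
    have h := congrArg conjTranspose hst
    simpa only [conjTranspose_mul, conjTranspose_smul, (isHermitian_pauliString _).eq] using h
  have hstar := star_mul_self_of_pow_four hc
  rw [commute_iff_eq, hst, hts, ← neg_smul]
  rcases sq_eq_one_or_neg_one_of_pow_four hc with hc | hc
  · exact Or.inl (congrArg (· • _) (by linear_combination star c * hc - c * hstar))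
  · exact Or.inr (congrArg (· • _) (by linear_combination star c * hc - c * hstar))

lemma IsPauli.commute_or_anticommute (hP : IsPauli P) (hR : IsPauli R) :
    Commute P R ∨ P * R = -(R * P) := by
  obtain ⟨a, -, s, rfl⟩ := isPauli_iff.1 hP
  obtain ⟨b, -, t, rfl⟩ := isPauli_iff.1 hR
  refine (pauliString_commute_or_anticommute s t).imp (fun h => ?_) fun h => ?_
  · exact (h.smul_left a).smul_right b
  · rw [smul_mul_smul_comm, smul_mul_smul_comm, h, smul_neg, mul_comm a]

lemma IsPauli.conjTranspose_mul_self (hP : IsPauli P) : Pᴴ * P = 1 := by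
  obtain ⟨c, hc, t, rfl⟩ := isPauli_iff.1 hP
  rw [conjTranspose_smul, (isHermitian_pauliString t).eq, smul_mul_smul_comm,
    star_mul_self_of_pow_four hc, one_smul, pauliString_mul_self]

lemma IsPauli.mul_self_of_isHermitian (hP : IsPauli P) (hPH : P.IsHermitian) : P * P = 1 := by
  simpa only [hPH.eq] using hP.conjTranspose_mul_self

lemma IsPauli.pow_four (hP : IsPauli P) : P ^ 4 = 1 := by
  obtain ⟨c, hc, t, rfl⟩ := isPauli_iff.1 hP
  rw [smul_pow, hc, one_smul, pow_mul _ 2 2, pow_two (pauliString t), pauliString_mul_self, one_pow]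

end PauliGroup

section StabilizerGroup

variable {n : ℕ} {P R : QMat n} {x : QVec n}

/-- `stabGroup x` as a submonoid of the operators. -/
def stabSubmonoid (x : QVec n) : Submonoid (QMat n) where
  carrier := stabGroup x
  one_mem' := ⟨isPauli_one, one_mulVec x⟩
  mul_mem' hP hR := ⟨hP.1.mul hR.1, by rw [← mulVec_mulVec, hR.2, hP.2]⟩

lemma commute_of_mem_stabGroup (hx : x ≠ 0) (hP : P ∈ stabGroup x) (hR : R ∈ stabGroup x) :
    Commute P R := by
  refine (hP.1.commute_or_anticommute hR.1).resolve_right fun h => hx ?_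
  have hneg := congrArg (· *ᵥ x) h
  simp only [neg_mulVec, ← mulVec_mulVec, hP.2, hR.2] at hneg
  exact self_eq_neg.1 hneg

lemma IsPauli.inv_smul_mem_stabGroup (hP : IsPauli P) (hx : x ≠ 0) {c : ℂ} (h : P *ᵥ x = c • x) :
    c ≠ 0 ∧ c⁻¹ • P ∈ stabGroup x := by
  have hc : c ^ 4 = 1 := pow_eq_one_of_mulVec_eq_smul hP.pow_four hx h
  have hc0 : c ≠ 0 := (IsUnit.of_pow_eq_one hc four_ne_zero).ne_zero
  exact ⟨hc0, hP.smul (by rw [inv_pow, hc, inv_one]), by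
    rw [smul_mulVec, h, inv_smul_smul₀ hc0]⟩

lemma mul_self_of_mem_stabGroup (hx : x ≠ 0) (hP : P ∈ stabGroup x) : P * P = 1 := by
  obtain ⟨c, -, t, rfl⟩ := isPauli_iff.1 hP.1
  have hsq : (c • pauliString t) * (c • pauliString t) = c ^ 2 • 1 := by
    rw [smul_mul_smul_comm, pauliString_mul_self, sq]
  have hc : c ^ 2 • x = (1 : ℂ) • x := by
    rw [one_smul, ← one_mulVec (c ^ 2 • x), mulVec_smul, ← smul_mulVec, ← hsq, ← mulVec_mulVec,
      hP.2, hP.2]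
  rw [hsq, smul_left_injective ℂ hx hc, one_smul]

lemma ncard_stabGroup (hx : x ≠ 0) :
    (stabGroup x).ncard = {t | ∃ c : ℂ, pauliString t *ᵥ x = c • x}.ncard := by
  symm
  refine Set.ncard_congr (fun t ht => ht.choose⁻¹ • pauliString t) (fun t ht => ?_)
    (fun s t hs ht hst => ?_) fun P hP => ?_
  · exact ((isPauli_pauliString t).inv_smul_mem_stabGroup hx ht.choose_spec).2
  · exact linearIndependent_pauliString.eq_of_smul_apply_eq_smul_apply _ _ _ _
      (inv_ne_zero ((isPauli_pauliString s).inv_smul_mem_stabGroup hx hs.choose_spec).1) hst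
  · obtain ⟨hPauli, hPx⟩ := hP
    obtain ⟨c, hc, t, rfl⟩ := isPauli_iff.1 hPauli
    have hc0 : c ≠ 0 := (IsUnit.of_pow_eq_one hc four_ne_zero).ne_zero
    have ht : pauliString t *ᵥ x = c⁻¹ • x := by
      rwa [eq_inv_smul_iff₀ hc0, ← smul_mulVec]
    refine ⟨t, ⟨_, ht⟩, ?_⟩
    generalize_proofs h
    rw [smul_left_injective ℂ hx (h.choose_spec.symm.trans ht), inv_inv]

end StabilizerGroup

section StabilizerStates

lemma ncard_eq_iff_of_sum_eq {ι : Type*} [Fintype ι] {f : ι → ℝ} {A : Set ι} {b : ℝ} {k : ℕ}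
    (hf : ∀ t, 0 ≤ f t) (hb : b ≠ 0) (hA : ∀ t ∈ A, f t = b) (hsum : ∑ t, f t = k * b) :
    A.ncard = k ↔ ∀ t, f t = 0 ∨ t ∈ A := by
  classical
  have hsplit : A.ncard * b + ∑ t ∈ A.toFinsetᶜ, f t = k * b := by
    rw [← hsum, ← Finset.sum_add_sum_compl A.toFinset f, Set.ncard_eq_toFinset_card',
      Finset.sum_congr rfl fun t ht => hA t (Set.mem_toFinset.1 ht), Finset.sum_const,
      nsmul_eq_mul]
  calc A.ncard = k ↔ ∑ t ∈ A.toFinsetᶜ, f t = 0 := by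
        rw [← add_eq_left, hsplit, mul_left_inj' hb, Nat.cast_inj, eq_comm]
    _ ↔ ∀ t, f t = 0 ∨ t ∈ A := by
        rw [Finset.sum_eq_zero_iff_of_nonneg fun t _ => hf t]
        simp only [Finset.mem_compl, Set.mem_toFinset, or_iff_not_imp_right]

variable {n : ℕ} {x y : QVec n}

lemma star_dotProduct_self (x : QVec n) : star x ⬝ᵥ x = (nrmSq x : ℂ) := by
  simp only [dotProduct, nrmSq, Complex.normSq_eq_conj_mul_self, Complex.ofReal_sum, Pi.star_apply,
    Complex.star_def]

lemma nrmSq_pos (hx : x ≠ 0) : 0 < nrmSq x := by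
  refine (Finset.sum_nonneg fun v _ => Complex.normSq_nonneg (x v)).lt_of_ne' fun h => ?_
  exact star_dotProduct_self_ne_zero hx <| by
    rw [star_dotProduct_self, nrmSq, h, Complex.ofReal_zero]

lemma IsStabState.ne_zero (hx : IsStabState x) : x ≠ 0 := by
  rintro rfl
  simpa [nrmSq] using hx.1

/-- Every Pauli operator either has vanishing expectation in `x` or has `x` as an eigenvector.
For `x ≠ 0` this characterizes, without reference to normalization, the multiples of stabilizer
states. -/
def PauliDichotomy (x : QVec n) : Prop :=
  ∀ P : QMat n, IsPauli P → star x ⬝ᵥ P *ᵥ x = 0 ∨ ∃ c : ℂ, P *ᵥ x = c • x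

lemma pauliDichotomy_iff_pauliString :
    PauliDichotomy x ↔ ∀ t : Fin n → Fin 4,
      star x ⬝ᵥ pauliString t *ᵥ x = 0 ∨ ∃ c : ℂ, pauliString t *ᵥ x = c • x := by
  refine ⟨fun h t => h _ (isPauli_pauliString t), fun h P hP => ?_⟩
  obtain ⟨d, -, t, rfl⟩ := isPauli_iff.1 hP
  refine (h t).imp (fun h0 => ?_) ?_
  · rw [smul_mulVec, dotProduct_smul, h0, smul_zero]
  · rintro ⟨c, hc⟩
    exact ⟨d * c, by rw [smul_mulVec, hc, smul_smul]⟩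

lemma ofReal_re_expectation (t : Fin n → Fin 4) (x : QVec n) :
    ((star x ⬝ᵥ pauliString t *ᵥ x).re : ℂ) = star x ⬝ᵥ pauliString t *ᵥ x :=
  Complex.ext rfl ((isHermitian_pauliString t).im_star_dotProduct_mulVec_self x).symm

lemma sum_sq_re_expectation (x : QVec n) :
    ∑ t : Fin n → Fin 4, (star x ⬝ᵥ pauliString t *ᵥ x).re ^ 2
      = ((2 ^ n : ℕ) : ℝ) * nrmSq x ^ 2 := by
  apply Complex.ofReal_injective
  push_cast
  simp only [ofReal_re_expectation, sq, sum_expectation_mul_expectation, star_dotProduct_self]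

lemma sq_re_expectation_of_mulVec_eq_smul (hx : x ≠ 0) {t : Fin n → Fin 4} {c : ℂ}
    (h : pauliString t *ᵥ x = c • x) :
    (star x ⬝ᵥ pauliString t *ᵥ x).re ^ 2 = nrmSq x ^ 2 := by
  have hc : c ^ 2 = 1 :=
    pow_eq_one_of_mulVec_eq_smul (by rw [sq, pauliString_mul_self]) hx h
  have hsq : (star x ⬝ᵥ pauliString t *ᵥ x) ^ 2 = (nrmSq x : ℂ) ^ 2 := by
    rw [h, dotProduct_smul, smul_eq_mul, mul_pow, hc, one_mul, star_dotProduct_self]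
  rw [← ofReal_re_expectation] at hsq
  exact_mod_cast hsq

lemma ncard_stabGroup_eq_iff (hx : x ≠ 0) :
    (stabGroup x).ncard = 2 ^ n ↔ PauliDichotomy x := by
  rw [ncard_stabGroup hx, pauliDichotomy_iff_pauliString]
  refine (ncard_eq_iff_of_sum_eq (fun _ => sq_nonneg _) (pow_ne_zero 2 (nrmSq_pos hx).ne') ?_
    (sum_sq_re_expectation x)).trans (forall_congr' fun t => or_congr ?_ Iff.rfl)
  · rintro t ⟨c, hc⟩
    exact sq_re_expectation_of_mulVec_eq_smul hx hc
  · rw [sq_eq_zero_iff, ← Complex.ofReal_eq_zero, ofReal_re_expectation]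

lemma IsStabState.pauliDichotomy (hx : IsStabState x) : PauliDichotomy x :=
  (ncard_stabGroup_eq_iff hx.ne_zero).1 hx.2

/-- The unit vector `x / ‖x‖`, with the junk value `0` at `x = 0`. -/
def normalized (x : QVec n) : QVec n := (Real.sqrt (nrmSq x))⁻¹ • x

lemma nrmSq_smul (r : ℝ) (x : QVec n) : nrmSq (r • x) = r ^ 2 * nrmSq x := by
  simp only [nrmSq, Finset.mul_sum, Pi.smul_apply, Complex.real_smul, Complex.normSq_mul,
    Complex.normSq_ofReal, sq]

lemma nrmSq_normalized (hx : x ≠ 0) : nrmSq (normalized x) = 1 := by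
  rw [normalized, nrmSq_smul, inv_pow, Real.sq_sqrt (nrmSq_pos hx).le,
    inv_mul_cancel₀ (nrmSq_pos hx).ne']

lemma stabGroup_normalized (hx : x ≠ 0) : stabGroup (normalized x) = stabGroup x := by
  have hr : (Real.sqrt (nrmSq x))⁻¹ ≠ 0 := inv_ne_zero (Real.sqrt_ne_zero'.2 (nrmSq_pos hx))
  ext P
  simp only [stabGroup, normalized, Set.mem_ofPred_eq, mulVec_smul, smul_right_inj hr]

lemma isStabState_normalized_iff (hx : x ≠ 0) :
    IsStabState (normalized x) ↔ PauliDichotomy x := by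
  rw [IsStabState, nrmSq_normalized hx, stabGroup_normalized hx, ncard_stabGroup_eq_iff hx,
    eq_self, true_and]

lemma IsStabState.pauliDichotomy_of_normalized (h : IsStabState (normalized x)) :
    PauliDichotomy x :=
  (isStabState_normalized_iff fun hx => h.ne_zero (by rw [hx, normalized, smul_zero])).1 h

lemma PauliDichotomy.of_smul {a : ℂ} (ha : a ≠ 0) (h : PauliDichotomy (a • x)) :
    PauliDichotomy x := by
  intro P hP
  refine (h P hP).imp (fun h0 => ?_) ?_
  · simpa only [mulVec_smul, star_smul, smul_dotProduct, dotProduct_smul, smul_eq_mul,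
      mul_eq_zero, star_eq_zero, ha, false_or] using h0
  · rintro ⟨c, hc⟩
    exact ⟨c, smul_right_injective _ ha (by simpa only [mulVec_smul, smul_comm a] using hc)⟩

lemma PauliDichotomy.eq_zero_of_stabilized_of_orthogonal (h : PauliDichotomy x) (hx : x ≠ 0)
    (hy : ∀ P ∈ stabGroup x, P *ᵥ y = y) (hxy : star x ⬝ᵥ y = 0) : y = 0 := by
  have hexp (t : Fin n → Fin 4) :
      (star x ⬝ᵥ pauliString t *ᵥ x) * (star y ⬝ᵥ pauliString t *ᵥ y) * (star x ⬝ᵥ x)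
        = (star x ⬝ᵥ pauliString t *ᵥ x) * (star x ⬝ᵥ pauliString t *ᵥ x) * (star y ⬝ᵥ y) := by
    rcases h _ (isPauli_pauliString t) with h0 | ⟨c, hc⟩
    · simp only [h0, zero_mul]
    · obtain ⟨hc0, hmem⟩ := (isPauli_pauliString t).inv_smul_mem_stabGroup hx hc
      have hcy : pauliString t *ᵥ y = c • y := by
        rw [← inv_smul_eq_iff₀ hc0, ← smul_mulVec, hy _ hmem]
      rw [hc, hcy, dotProduct_smul, dotProduct_smul, smul_eq_mul, smul_eq_mul]
      ring
  have hsum := Finset.sum_congr rfl fun t (_ : t ∈ Finset.univ) => hexp t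
  simp only [← Finset.sum_mul, sum_expectation_mul_expectation, hxy, mul_zero, zero_mul] at hsum
  have hxx := star_dotProduct_self_ne_zero hx
  by_contra hy0
  exact mul_ne_zero (mul_ne_zero (pow_ne_zero n two_ne_zero) (mul_ne_zero hxx hxx))
    (star_dotProduct_self_ne_zero hy0) hsum.symm

lemma PauliDichotomy.exists_mulVec_eq_smul_of_commute (h : PauliDichotomy x) (hx : x ≠ 0)
    {W : QMat n} (hW : IsPauli W) (hcomm : ∀ P ∈ stabGroup x, Commute W P) :
    ∃ c : ℂ, W *ᵥ x = c • x := by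
  refine (h W hW).elim (fun horth => ⟨0, ?_⟩) id
  rw [zero_smul]
  refine h.eq_zero_of_stabilized_of_orthogonal hx (fun P hP => ?_) horth
  rw [mulVec_mulVec, ← (hcomm P hP).eq, ← mulVec_mulVec, hP.2]

end StabilizerStates

section Projections

variable {ι : Type*} [DecidableEq ι]

/-- For a Hermitian involution `N`, the orthogonal projector onto its `+1` eigenspace. Measuring `M`
with outcome `m = ±1` projects with `eigenProj (m • M)`. -/
def eigenProj (N : Matrix ι ι ℂ) : Matrix ι ι ℂ := (2 : ℂ)⁻¹ • (1 + N)

variable [Fintype ι] {N A : Matrix ι ι ℂ} {x : ι → ℂ}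

lemma eigenProj_mulVec (N : Matrix ι ι ℂ) (x : ι → ℂ) :
    eigenProj N *ᵥ x = (2 : ℂ)⁻¹ • (x + N *ᵥ x) := by
  rw [eigenProj, smul_mulVec, add_mulVec, one_mulVec]

lemma commute_eigenProj (h : Commute A N) : Commute A (eigenProj N) :=
  ((Commute.one_right A).add_right h).smul_right _

lemma mulVec_eigenProj_mulVec (hN : N * N = 1) (x : ι → ℂ) :
    N *ᵥ eigenProj N *ᵥ x = eigenProj N *ᵥ x := by
  rw [eigenProj_mulVec, mulVec_smul, mulVec_add, mulVec_mulVec, hN, one_mulVec, add_comm]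

lemma eigenProj_mulVec_of_mulVec_eq_smul {c : ℂ} (h : N *ᵥ x = c • x) :
    eigenProj N *ᵥ x = ((1 + c) / 2) • x := by
  rw [eigenProj_mulVec, h]
  module

lemma star_eigenProj_mulVec_dotProduct (hN : N * N = 1) (hNH : N.IsHermitian) (x y : ι → ℂ) :
    star (eigenProj N *ᵥ x) ⬝ᵥ eigenProj N *ᵥ y
      = (2 : ℂ)⁻¹ * (star x ⬝ᵥ y + star x ⬝ᵥ N *ᵥ y) := by
  have hH : (eigenProj N)ᴴ = eigenProj N := by
    rw [eigenProj, conjTranspose_smul, conjTranspose_add, conjTranspose_one, hNH.eq, star_inv₀,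
      star_ofNat]
  have hidem : eigenProj N *ᵥ eigenProj N *ᵥ y = eigenProj N *ᵥ y := by
    rw [eigenProj_mulVec N (eigenProj N *ᵥ y), mulVec_eigenProj_mulVec hN]
    module
  rw [star_mulVec, ← dotProduct_mulVec, hH, hidem, eigenProj_mulVec, dotProduct_smul,
    dotProduct_add, smul_eq_mul]

variable {Q : Matrix ι ι ℂ} {y : ι → ℂ}

lemma star_eigenProj_mulVec_dotProduct_of_anticommute (hN : N * N = 1) (hNH : N.IsHermitian)
    (hQ : Qᴴ * Q = 1) (hNQ : N * Q = -(Q * N)) (hx : Q *ᵥ x = x) (hy : Q *ᵥ y = y) :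
    star (eigenProj N *ᵥ x) ⬝ᵥ eigenProj N *ᵥ y = (2 : ℂ)⁻¹ * (star x ⬝ᵥ y) := by
  rw [star_eigenProj_mulVec_dotProduct hN hNH,
    dotProduct_mulVec_eq_zero_of_anticommute hQ hNQ (hx.trans (one_smul ℂ x).symm)
      (hy.trans (one_smul ℂ y).symm), add_zero]

lemma eq_zero_of_eigenProj_mulVec_eq_zero (hN : N * N = 1) (hNH : N.IsHermitian)
    (hQ : Qᴴ * Q = 1) (hNQ : N * Q = -(Q * N)) (hx : Q *ᵥ x = x) (h : eigenProj N *ᵥ x = 0) :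
    x = 0 := by
  have hxx := star_eigenProj_mulVec_dotProduct_of_anticommute hN hNH hQ hNQ hx hx
  rw [h, dotProduct_zero, zero_eq_mul, or_iff_right (inv_ne_zero two_ne_zero)] at hxx
  by_contra hx0
  exact star_dotProduct_self_ne_zero hx0 hxx

end Projections

section CliffordMeasurements

variable {n : ℕ} {N P Q : QMat n} {x : QVec n}

lemma IsPauli.exists_commute_mulVec_eq (hP : IsPauli P) (hN : IsPauli N) (hQ : IsPauli Q)
    (hNQ : N * Q = -(Q * N)) (hx : Q *ᵥ x = x) :
    ∃ P' : QMat n, IsPauli P' ∧ Commute P' N ∧ P' *ᵥ x = P *ᵥ x := by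
  rcases hP.commute_or_anticommute hN with hPN | hPN
  · exact ⟨P, hP, hPN, rfl⟩
  · refine ⟨P * Q, hP.mul hQ, ?_, by rw [← mulVec_mulVec, hx]⟩
    rw [commute_iff_eq]
    calc P * Q * N = -(P * N * Q) := by rw [mul_assoc P N, hNQ, mul_neg, neg_neg, mul_assoc]
      _ = N * (P * Q) := by rw [hPN, neg_mul, neg_neg, mul_assoc]

-- On the vectors fixed by `Q` the projector of an anticommuting `N` acts as `1/√2` times a Clifford
-- unitary, so such a measurement can neither create nor destroy magic.
lemma PauliDichotomy.of_eigenProj (h : PauliDichotomy (eigenProj N *ᵥ x)) (hN : IsPauli N)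
    (hNH : N.IsHermitian) (hQ : IsPauli Q) (hNQ : N * Q = -(Q * N)) (hx : Q *ᵥ x = x) :
    PauliDichotomy x := by
  intro P hP
  have hNN := hN.mul_self_of_isHermitian hNH
  have hQQ := hQ.conjTranspose_mul_self
  rcases (hP.commute_or_anticommute hQ).symm with hPQ | hPQ
  · exact Or.inl (dotProduct_mulVec_eq_zero_of_anticommute (c := 1) hQQ hPQ (by rw [hx, one_smul])
      (by rw [hx, one_smul]))
  obtain ⟨P', hP', hP'N, hP'x⟩ := hP.exists_commute_mulVec_eq hN hQ hNQ hx
  have hfix : Q *ᵥ P *ᵥ x = P *ᵥ x := by rw [mulVec_mulVec, ← hPQ.eq, ← mulVec_mulVec, hx]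
  have hproj : P' *ᵥ eigenProj N *ᵥ x = eigenProj N *ᵥ P *ᵥ x := by
    rw [mulVec_mulVec, (commute_eigenProj hP'N).eq, ← mulVec_mulVec, hP'x]
  refine (h P' hP').imp (fun horth => ?_) fun ⟨c, hc⟩ => ⟨c, sub_eq_zero.1 ?_⟩
  · rwa [hproj, star_eigenProj_mulVec_dotProduct_of_anticommute hNN hNH hQQ hNQ hx hfix,
      mul_eq_zero, or_iff_right (inv_ne_zero two_ne_zero)] at horth
  · refine eq_zero_of_eigenProj_mulVec_eq_zero hNN hNH hQQ hNQ ?_ ?_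
    · rw [mulVec_sub, mulVec_smul, hfix, hx]
    · rw [mulVec_sub, mulVec_smul, ← hproj, hc, sub_self]

end CliffordMeasurements

section LogicalPaulis

variable {n : ℕ}

/-- Hermitian representatives `Z̄, X̄, Ȳ` of the nontrivial logical Paulis of the one-qubit code
whose logical Pauli operators are generated by the anticommuting Hermitian Paulis `s` and `Z`. -/
def logicalPaulis (s Z : QMat n) : Set (QMat n) := {Z, s, Complex.I • (s * Z)}

/-- The stabilizer group of the stabilizer state `ψ` is generated by `s` and its subgroup `G`, and
the Pauli involution `Z` commutes with `G` and anticommutes with `s`. The vectors fixed by `G` then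
form a one-qubit code on which `s` and `Z` are anticommuting logical Pauli operators. -/
structure LogicalFrame (ψ : QVec n) (s Z : QMat n) (G : Submonoid (QMat n)) : Prop where
  isStabState : IsStabState ψ
  s_mem : s ∈ stabGroup ψ
  G_le : G ≤ stabSubmonoid ψ
  exists_eq : ∀ P ∈ stabGroup ψ, ∃ Q ∈ G, P = Q ∨ P = s * Q
  isPauli_Z : IsPauli Z
  Z_mul_self : Z * Z = 1
  Z_mul_s : Z * s = -(s * Z)
  commute_Z : ∀ Q ∈ G, Commute Z Q

namespace LogicalFrame

variable {ψ : QVec n} {s Z : QMat n} {G : Submonoid (QMat n)} {L L' P Q R : QMat n}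

lemma s_mul_self (F : LogicalFrame ψ s Z G) : s * s = 1 :=
  mul_self_of_mem_stabGroup F.isStabState.ne_zero F.s_mem

lemma mul_self_of_mem (F : LogicalFrame ψ s Z G) (hQ : Q ∈ G) : Q * Q = 1 :=
  mul_self_of_mem_stabGroup F.isStabState.ne_zero (F.G_le hQ)

lemma isPauli_of_mem (F : LogicalFrame ψ s Z G) (hQ : Q ∈ G) : IsPauli Q := (F.G_le hQ).1

lemma commute_of_mem (F : LogicalFrame ψ s Z G) (hQ : Q ∈ G) (hR : R ∈ G) : Commute Q R :=
  commute_of_mem_stabGroup F.isStabState.ne_zero (F.G_le hQ) (F.G_le hR)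

lemma s_commute_of_mem (F : LogicalFrame ψ s Z G) (hQ : Q ∈ G) : Commute s Q :=
  commute_of_mem_stabGroup F.isStabState.ne_zero F.s_mem (F.G_le hQ)

lemma isPauli_of_mem_logicalPaulis (F : LogicalFrame ψ s Z G) (hL : L ∈ logicalPaulis s Z) :
    IsPauli L := by
  rcases hL with rfl | rfl | rfl
  exacts [F.isPauli_Z, F.s_mem.1, (F.s_mem.1.mul F.isPauli_Z).smul Complex.I_pow_four]

lemma mul_self_of_mem_logicalPaulis (F : LogicalFrame ψ s Z G) (hL : L ∈ logicalPaulis s Z) :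
    L * L = 1 := by
  rcases hL with rfl | rfl | rfl
  · exact F.Z_mul_self
  · exact F.s_mul_self
  · rw [smul_mul_smul_comm, Complex.I_mul_I, mul_assoc, ← mul_assoc Z, F.Z_mul_s, neg_mul, mul_neg,
      mul_assoc, F.Z_mul_self, mul_one, F.s_mul_self, neg_smul_neg, one_smul]

lemma commute_of_mem_logicalPaulis (F : LogicalFrame ψ s Z G) (hL : L ∈ logicalPaulis s Z)
    (hQ : Q ∈ G) : Commute L Q := by
  rcases hL with rfl | rfl | rfl
  · exact F.commute_Z Q hQ
  · exact F.s_commute_of_mem hQ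
  · exact ((F.s_commute_of_mem hQ).mul_left (F.commute_Z Q hQ)).smul_left _

lemma pairwise_anticommute_logicalPaulis (F : LogicalFrame ψ s Z G) :
    (logicalPaulis s Z).Pairwise fun L L' => L * L' = -(L' * L) := by
  have hsymm : Std.Symm fun L L' : QMat n => L * L' = -(L' * L) :=
    ⟨fun L L' h => by rw [h, neg_neg]⟩
  rw [logicalPaulis, Set.pairwise_insert_of_symm, Set.pairwise_pair_of_symm]
  refine ⟨fun _ => ?_, ?_⟩
  · rw [mul_smul_comm, smul_mul_assoc, mul_assoc s Z, F.Z_mul_s, mul_neg, smul_neg, neg_neg]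
  · rintro _ (rfl | rfl) -
    · exact F.Z_mul_s
    · rw [mul_smul_comm, smul_mul_assoc, ← mul_assoc, F.Z_mul_s, neg_mul, smul_neg]

lemma exists_eq_smul_of_commute (F : LogicalFrame ψ s Z G) (hP : IsPauli P) (hPs : Commute P s)
    (hPG : ∀ Q ∈ G, Commute P Q) : ∃ (c : ℂ), ∃ Q ∈ G, P = c • Q ∨ P = c • (s * Q) := by
  have hψ := F.isStabState.ne_zero
  obtain ⟨c, hc⟩ := F.isStabState.pauliDichotomy.exists_mulVec_eq_smul_of_commute hψ hP <| by
    intro R hR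
    obtain ⟨Q, hQ, rfl | rfl⟩ := F.exists_eq R hR
    exacts [hPG _ hQ, hPs.mul_right (hPG Q hQ)]
  obtain ⟨hc0, hmem⟩ := hP.inv_smul_mem_stabGroup hψ hc
  obtain ⟨Q, hQ, h⟩ := F.exists_eq _ hmem
  exact ⟨c, Q, hQ, by simpa only [inv_smul_eq_iff₀ hc0] using h⟩

lemma exists_eq_smul_mul (F : LogicalFrame ψ s Z G) (hP : IsPauli P)
    (hPG : ∀ Q ∈ G, Commute P Q) :
    ∃ (c : ℂ), ∃ L ∈ insert 1 (logicalPaulis s Z), ∃ Q ∈ G, P = c • (L * Q) := by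
  rcases hP.commute_or_anticommute F.s_mem.1 with hPs | hPs
  · obtain ⟨c, Q, hQ, h | h⟩ := F.exists_eq_smul_of_commute hP hPs hPG
    · exact ⟨c, 1, by simp, Q, hQ, by rw [h, one_mul]⟩
    · exact ⟨c, s, by simp [logicalPaulis], Q, hQ, h⟩
  · have hZPs : Commute (Z * P) s := by
      rw [commute_iff_eq, mul_assoc, hPs, mul_neg, ← mul_assoc, F.Z_mul_s, neg_mul, neg_neg,
        mul_assoc]
    have hP' : P = Z * (Z * P) := by rw [← mul_assoc, F.Z_mul_self, one_mul]
    obtain ⟨c, Q, hQ, h | h⟩ := F.exists_eq_smul_of_commute (F.isPauli_Z.mul hP) hZPs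
      fun Q hQ => (F.commute_Z Q hQ).mul_left (hPG Q hQ)
    · exact ⟨c, Z, by simp [logicalPaulis], Q, hQ, by rw [hP', h, mul_smul_comm]⟩
    · refine ⟨c * Complex.I, Complex.I • (s * Z), by simp [logicalPaulis], Q, hQ, ?_⟩
      rw [hP', h, mul_smul_comm, ← mul_assoc, F.Z_mul_s, smul_mul_assoc, smul_smul, mul_assoc c,
        Complex.I_mul_I, neg_mul, smul_neg, mul_neg_one, neg_smul]

lemma pauliDichotomy_of_mulVec_eq_smul (F : LogicalFrame ψ s Z G) (hL : L ∈ logicalPaulis s Z)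
    {x : QVec n} (hGx : ∀ R ∈ G, R *ᵥ x = x) {l : ℂ} (hLx : L *ᵥ x = l • x) :
    PauliDichotomy x := by
  intro P hP
  by_cases hPG : ∀ R ∈ G, Commute P R
  · obtain ⟨c, L', hL', Q, hQ, rfl⟩ := F.exists_eq_smul_mul hP hPG
    rw [smul_mulVec, ← mulVec_mulVec, hGx Q hQ, dotProduct_smul]
    rcases hL' with rfl | hL'
    · exact Or.inr ⟨c, by rw [one_mulVec]⟩
    · by_cases hLL' : L' = L
      · exact Or.inr ⟨c * l, by rw [hLL', hLx, smul_smul]⟩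
      · have hanti := F.pairwise_anticommute_logicalPaulis hL' hL hLL'
        left
        rw [dotProduct_mulVec_eq_zero_of_anticommute
          (F.isPauli_of_mem_logicalPaulis hL).conjTranspose_mul_self hanti hLx hLx, smul_zero]
  · push Not at hPG
    obtain ⟨R, hR, hPR⟩ := hPG
    have hanti := (hP.commute_or_anticommute (F.isPauli_of_mem hR)).resolve_left hPR
    have hRx : R *ᵥ x = (1 : ℂ) • x := by rw [hGx R hR, one_smul]
    exact Or.inl (dotProduct_mulVec_eq_zero_of_anticommute
      (F.isPauli_of_mem hR).conjTranspose_mul_self hanti hRx hRx)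

section Measurement

variable {N : QMat n} {x : QVec n}

lemma pauliDichotomy_eigenProj_of_eq_logical (F : LogicalFrame ψ s Z G)
    (hGx : ∀ R ∈ G, R *ᵥ x = x) (hNN : N * N = 1) (hL : L ∈ logicalPaulis s Z) (hQ : Q ∈ G)
    (h : N = L * Q ∨ N = -(L * Q)) : PauliDichotomy (eigenProj N *ᵥ x) := by
  have hGN (R) (hR : R ∈ G) : Commute R N := by
    have hRLQ := (F.commute_of_mem_logicalPaulis hL hR).symm.mul_right (F.commute_of_mem hR hQ)
    rcases h with rfl | rfl
    exacts [hRLQ, hRLQ.neg_right]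
  have hGv (R) (hR : R ∈ G) : R *ᵥ eigenProj N *ᵥ x = eigenProj N *ᵥ x := by
    rw [mulVec_mulVec, (commute_eigenProj (hGN R hR)).eq, ← mulVec_mulVec, hGx R hR]
  obtain ⟨l, hl⟩ : ∃ l : ℂ, L * Q = l • N := by
    rcases h with rfl | rfl
    exacts [⟨1, (one_smul ℂ _).symm⟩, ⟨-1, by rw [neg_smul_neg, one_smul]⟩]
  refine F.pauliDichotomy_of_mulVec_eq_smul hL hGv (l := l) ?_
  calc L *ᵥ eigenProj N *ᵥ x = (L * Q) *ᵥ eigenProj N *ᵥ x := by rw [← mulVec_mulVec, hGv Q hQ]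
    _ = l • eigenProj N *ᵥ x := by rw [hl, smul_mulVec, mulVec_eigenProj_mulVec hNN]

lemma commute_of_pauliDichotomy_eigenProj (F : LogicalFrame ψ s Z G)
    (hGx : ∀ R ∈ G, R *ᵥ x = x) (hx : ¬ PauliDichotomy x) (hN : IsPauli N) (hNH : N.IsHermitian)
    (h : PauliDichotomy (eigenProj N *ᵥ x)) (hQ : Q ∈ G) : Commute N Q :=
  (hN.commute_or_anticommute (F.isPauli_of_mem hQ)).resolve_right fun hNQ =>
    hx (h.of_eigenProj hN hNH (F.isPauli_of_mem hQ) hNQ (hGx Q hQ))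

lemma eq_logical_of_pauliDichotomy_eigenProj (F : LogicalFrame ψ s Z G)
    (hGx : ∀ R ∈ G, R *ᵥ x = x) (hx : ¬ PauliDichotomy x) (hN : IsPauli N) (hNH : N.IsHermitian)
    (hne : eigenProj N *ᵥ x ≠ 0) (h : PauliDichotomy (eigenProj N *ᵥ x)) :
    ∃ Q ∈ G, ∃ L ∈ logicalPaulis s Z, N = L * Q ∨ N = -(L * Q) := by
  obtain ⟨c, L, hL, Q, hQ, hNLQ⟩ := F.exists_eq_smul_mul hN fun Q hQ =>
    F.commute_of_pauliDichotomy_eigenProj hGx hx hN hNH h hQ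
  rcases hL with rfl | hL
  · have hNx : N *ᵥ x = c • x := by rw [hNLQ, one_mul, smul_mulVec, hGx Q hQ]
    rw [eigenProj_mulVec_of_mulVec_eq_smul hNx] at h hne
    exact absurd (h.of_smul (left_ne_zero_of_smul hne)) hx
  · have hsq : c ^ 2 • (1 : QMat n) = (1 : ℂ) • 1 := by
      calc c ^ 2 • (1 : QMat n) = c ^ 2 • ((L * L) * (Q * Q)) := by
            rw [F.mul_self_of_mem_logicalPaulis hL, F.mul_self_of_mem hQ, one_mul]
        _ = N * N := by
            rw [hNLQ, smul_mul_smul_comm, sq,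
              (F.commute_of_mem_logicalPaulis hL hQ).symm.mul_mul_mul_comm]
        _ = (1 : ℂ) • 1 := by rw [hN.mul_self_of_isHermitian hNH, one_smul]
    have hc := sq_eq_one_iff.1 (smul_left_injective ℂ one_ne_zero hsq)
    refine ⟨Q, hQ, L, hL, hc.imp ?_ ?_⟩ <;> rintro rfl <;> simpa using hNLQ

theorem pauliDichotomy_eigenProj_iff (F : LogicalFrame ψ s Z G) (hGx : ∀ R ∈ G, R *ᵥ x = x)
    (hx : ¬ PauliDichotomy x) (hN : IsPauli N) (hNH : N.IsHermitian)
    (hne : eigenProj N *ᵥ x ≠ 0) :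
    PauliDichotomy (eigenProj N *ᵥ x) ↔
      ∃ Q ∈ G, ∃ L ∈ logicalPaulis s Z, N = L * Q ∨ N = -(L * Q) := by
  refine ⟨F.eq_logical_of_pauliDichotomy_eigenProj hGx hx hN hNH hne, ?_⟩
  rintro ⟨Q, hQ, L, hL, h⟩
  exact F.pauliDichotomy_eigenProj_of_eq_logical hGx (hN.mul_self_of_isHermitian hNH) hL hQ h

end Measurement

section CodeVectors

lemma mulVec_superposition (F : LogicalFrame ψ s Z G) (hQ : Q ∈ G) (a b : ℂ) :
    Q *ᵥ (a • ψ + b • Z *ᵥ ψ) = a • ψ + b • Z *ᵥ ψ := by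
  rw [mulVec_add, mulVec_smul, mulVec_smul, mulVec_mulVec, ← (F.commute_Z Q hQ).eq,
    ← mulVec_mulVec, (F.G_le hQ).2]

lemma s_mulVec_superposition (F : LogicalFrame ψ s Z G) (a b : ℂ) :
    s *ᵥ (a • ψ + b • Z *ᵥ ψ) = a • ψ + (-b) • Z *ᵥ ψ := by
  have hsZ : s * Z = -(Z * s) := by rw [F.Z_mul_s, neg_neg]
  rw [mulVec_add, mulVec_smul, mulVec_smul, mulVec_mulVec, hsZ, neg_mulVec, ← mulVec_mulVec,
    F.s_mem.2, smul_neg, neg_smul]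

lemma star_superposition_dotProduct (F : LogicalFrame ψ s Z G) (a b a' b' : ℂ) :
    star (a • ψ + b • Z *ᵥ ψ) ⬝ᵥ (a' • ψ + b' • Z *ᵥ ψ)
      = (star a * a' + star b * b') * (star ψ ⬝ᵥ ψ) := by
  have hψ : s *ᵥ ψ = (1 : ℂ) • ψ := by rw [F.s_mem.2, one_smul]
  have hZ : star ψ ⬝ᵥ Z *ᵥ ψ = 0 :=
    dotProduct_mulVec_eq_zero_of_anticommute F.s_mem.1.conjTranspose_mul_self F.Z_mul_s hψ hψ
  have hZ' : star (Z *ᵥ ψ) ⬝ᵥ ψ = 0 := by rw [star_dotProduct, hZ, star_zero]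
  have hZZ : star (Z *ᵥ ψ) ⬝ᵥ Z *ᵥ ψ = star ψ ⬝ᵥ ψ := by
    rw [star_mulVec, ← dotProduct_mulVec, mulVec_mulVec, F.isPauli_Z.conjTranspose_mul_self,
      one_mulVec]
  simp only [star_add, star_smul, add_dotProduct, dotProduct_add, smul_dotProduct, dotProduct_smul,
    hZ, hZ', hZZ, smul_eq_mul]
  ring

lemma not_pauliDichotomy_superposition (F : LogicalFrame ψ s Z G) {a b : ℂ} (ha : a ≠ 0)
    (hb : b ≠ 0) (hab : ‖a‖ ≠ ‖b‖) : ¬ PauliDichotomy (a • ψ + b • Z *ᵥ ψ) := by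
  intro h
  have hψ := star_dotProduct_self_ne_zero F.isStabState.ne_zero
  rcases h s F.s_mem.1 with h0 | ⟨c, hc⟩
  · rw [F.s_mulVec_superposition, F.star_superposition_dotProduct, mul_eq_zero, or_iff_left hψ,
      mul_neg, Complex.star_def, Complex.conj_mul', Complex.conj_mul',
      add_neg_eq_zero] at h0
    have hsq : ‖a‖ ^ 2 = ‖b‖ ^ 2 := by exact_mod_cast h0
    exact hab ((pow_left_inj₀ (norm_nonneg a) (norm_nonneg b) two_ne_zero).1 hsq)
  · have hcoeff (a' b' : ℂ) : star a' * a + star b' * -b = c * (star a' * a + star b' * b) := by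
      have hpair := congrArg (star (a' • ψ + b' • Z *ᵥ ψ) ⬝ᵥ ·) hc
      simp only [F.s_mulVec_superposition, F.star_superposition_dotProduct, dotProduct_smul,
        smul_eq_mul, ← mul_assoc] at hpair
      exact mul_right_cancel₀ hψ hpair
    have hc1 : c = 1 := by simpa [ha] using hcoeff 1 0
    have hc2 : -b = c * b := by simpa using hcoeff 0 1
    rw [hc1, one_mul] at hc2
    exact hb (neg_eq_self.1 hc2)

end CodeVectors

end LogicalFrame

end LogicalPaulis

section Generators

variable {n : ℕ}

lemma exists_prodPow_eq {m : ℕ} [NeZero m] (g : Fin m → QMat n) (α : Fin m → ZMod 2) :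
    ∃ Q ∈ Submonoid.closure {Q : QMat n | ∃ i : Fin m, i ≠ 0 ∧ Q = g i},
      prodPow g α = Q ∨ prodPow g α = g 0 * Q := by
  obtain ⟨m, rfl⟩ := Nat.exists_eq_succ_of_ne_zero (NeZero.ne m)
  refine ⟨(List.ofFn fun i : Fin m => g i.succ ^ (α i.succ).val).prod, ?_, ?_⟩
  · refine Submonoid.list_prod_mem _ (List.forall_mem_ofFn_iff.2 fun i => ?_)
    refine Submonoid.pow_mem _ (Submonoid.subset_closure ?_) _
    exact ⟨i.succ, i.succ_ne_zero, rfl⟩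
  · rw [prodPow, List.ofFn_succ, List.prod_cons]
    have hα : (α 0).val < 2 := ZMod.val_lt (α 0)
    interval_cases (α 0).val
    exacts [Or.inl (by rw [pow_zero, one_mul]), Or.inr (by rw [pow_one])]

lemma logicalFrame_of_isIndepGenSet {m : ℕ} [NeZero m] {ψ : QVec n} (hψ : IsStabState ψ)
    {g : Fin m → QMat n} (hg : IsIndepGenSet ψ g) {Z : QMat n} (hZ : IsPauli Z) (hZZ : Z * Z = 1)
    (hanti : Z * g 0 = -(g 0 * Z)) (hcomm : ∀ i, i ≠ 0 → Z * g i = g i * Z) :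
    LogicalFrame ψ (g 0) Z (Submonoid.closure {Q : QMat n | ∃ i, i ≠ 0 ∧ Q = g i}) where
  isStabState := hψ
  s_mem := hg.1 0
  G_le := Submonoid.closure_le.2 <| by
    rintro _ ⟨i, -, rfl⟩
    exact hg.1 i
  exists_eq P hP := by
    rw [← hg.2.2] at hP
    obtain ⟨α, rfl⟩ := hP
    exact exists_prodPow_eq g α
  isPauli_Z := hZ
  Z_mul_self := hZZ
  Z_mul_s := hanti
  commute_Z Q hQ := by
    have hle : Submonoid.closure {Q : QMat n | ∃ i, i ≠ 0 ∧ Q = g i} ≤ Submonoid.centralizer {Z} :=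
      Submonoid.closure_le.2 <| by
        rintro _ ⟨i, hi, rfl⟩ _ rfl
        exact hcomm i hi
    exact Submonoid.mem_centralizer_iff.1 (hle hQ) Z rfl

end Generators

section TGate

variable {n : ℕ}

lemma opAt_apply (j : Fin n) (m : Matrix (Fin 2) (Fin 2) ℂ) (v w : Fin n → Fin 2) :
    opAt j m v w = m (v j) (w j) * ∏ i ∈ Finset.univ.erase j, σI (v i) (w i) := by
  rw [opAt, kron, ← Finset.mul_prod_erase _ _ (Finset.mem_univ j), if_pos rfl]
  congr 1
  exact Finset.prod_congr rfl fun i hi => by rw [if_neg (Finset.ne_of_mem_erase hi)]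

lemma opAt_smul_add_smul (j : Fin n) (a b : ℂ) (A B : Matrix (Fin 2) (Fin 2) ℂ) :
    opAt j (a • A + b • B) = a • opAt j A + b • opAt j B := by
  ext v w
  simp only [opAt_apply, Matrix.add_apply, Matrix.smul_apply, smul_eq_mul]
  ring

lemma opAt_one (j : Fin n) : opAt j 1 = 1 := by
  simp only [opAt, σI, ite_self, kron_one]

lemma opAt_mul (j : Fin n) (A B : Matrix (Fin 2) (Fin 2) ℂ) :
    opAt j A * opAt j B = opAt j (A * B) := by
  simp only [opAt, kron_mul, σI]
  congr 1
  ext1 i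
  split_ifs
  exacts [rfl, mul_one 1]

lemma isPauli_opAt (j : Fin n) {m : Matrix (Fin 2) (Fin 2) ℂ} (hm : IsPauliFactor m) :
    IsPauli (opAt j m) :=
  isPauli_kron fun i => by
    split_ifs
    exacts [hm, Or.inl rfl]

lemma opAt_σZ_mul_self (j : Fin n) : opAt j σZ * opAt j σZ = 1 := by
  rw [opAt_mul, ← opAt_one j]
  congr 1
  simp [σZ, one_fin_two]

lemma opAt_diag_mulVec (j : Fin n) (t : ℂ) (x : QVec n) :
    opAt j !![1, 0; 0, t] *ᵥ x = ((1 + t) / 2) • x + ((1 - t) / 2) • opAt j σZ *ᵥ x := by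
  have hdiag : !![1, 0; 0, t] = ((1 + t) / 2) • 1 + ((1 - t) / 2) • σZ := by
    ext a b
    fin_cases a <;> fin_cases b <;> simp [σZ] <;> ring
  rw [hdiag, opAt_smul_add_smul, opAt_one, add_mulVec, smul_mulVec, smul_mulVec, one_mulVec]

lemma norm_one_add_ne_norm_one_sub {t : ℂ} (ht : t.re ≠ 0) : ‖1 + t‖ ≠ ‖1 - t‖ := by
  intro h
  have hsq := congrArg (· ^ 2) h
  simp only [← Complex.normSq_eq_norm_sq, Complex.normSq_apply, Complex.add_re, Complex.add_im,
    Complex.sub_re, Complex.sub_im, Complex.one_re, Complex.one_im] at hsq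
  exact ht (by linear_combination hsq / 4)

lemma LogicalFrame.not_pauliDichotomy_opAt_diag_mulVec {ψ : QVec n} {s : QMat n}
    {G : Submonoid (QMat n)} {j : Fin n} (F : LogicalFrame ψ s (opAt j σZ) G) {t : ℂ}
    (hre : t.re ≠ 0) (him : t.im ≠ 0) : ¬ PauliDichotomy (opAt j !![1, 0; 0, t] *ᵥ ψ) := by
  have hadd : 1 + t ≠ 0 := fun h => him (by simpa using congrArg Complex.im h)
  have hsub : 1 - t ≠ 0 := fun h => him (by simpa using congrArg Complex.im h)
  rw [opAt_diag_mulVec]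
  refine F.not_pauliDichotomy_superposition (div_ne_zero hadd two_ne_zero)
    (div_ne_zero hsub two_ne_zero) ?_
  rw [norm_div, norm_div, Ne, div_left_inj' (norm_ne_zero_iff.2 two_ne_zero)]
  exact norm_one_add_ne_norm_one_sub hre

lemma LogicalFrame.mulVec_opAt_diag {ψ : QVec n} {s : QMat n} {G : Submonoid (QMat n)}
    {j : Fin n} (F : LogicalFrame ψ s (opAt j σZ) G) (t : ℂ) {R : QMat n} (hR : R ∈ G) :
    R *ᵥ opAt j !![1, 0; 0, t] *ᵥ ψ = opAt j !![1, 0; 0, t] *ᵥ ψ := by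
  rw [opAt_diag_mulVec, F.mulVec_superposition hR]

lemma LogicalFrame.not_isStabState_normalized_opAt_Tgate_mulVec {ψ : QVec n} {s : QMat n}
    {G : Submonoid (QMat n)} {j : Fin n} (F : LogicalFrame ψ s (opAt j σZ) G) :
    ¬ IsStabState (normalized (opAt j Tgate *ᵥ ψ)) := fun h =>
  F.not_pauliDichotomy_opAt_diag_mulVec (by simp [Complex.exp_re]) (by simp [Complex.exp_im])
    h.pauliDichotomy_of_normalized

end TGate

section Criterion

variable {n : ℕ}

lemma exists_mem_logicalPaulis_iff {s Z M Q : QMat n} :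
    (∃ L ∈ logicalPaulis s Z, M = L * Q ∨ M = -(L * Q)) ↔
      M = Z * Q ∨ M = -(Z * Q) ∨ M = s * Q ∨ M = -(s * Q) ∨
        M = Complex.I • (s * (Z * Q)) ∨ M = -(Complex.I • (s * (Z * Q))) := by
  simp only [logicalPaulis, Set.mem_insert_iff, Set.mem_singleton_iff, exists_eq_or_imp,
    exists_eq_left, smul_mul_assoc, mul_assoc, or_assoc]

lemma LogicalFrame.pauliDichotomy_eigenProj_smul_iff {ψ x : QVec n} {s Z : QMat n}
    {G : Submonoid (QMat n)} (F : LogicalFrame ψ s Z G) (hGx : ∀ R ∈ G, R *ᵥ x = x)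
    (hx : ¬ PauliDichotomy x) {M : QMat n} (hMP : IsPauli M) (hMH : M.IsHermitian) {m : ℂ}
    (hm : m = 1 ∨ m = -1) (hne : eigenProj (m • M) *ᵥ x ≠ 0) :
    PauliDichotomy (eigenProj (m • M) *ᵥ x) ↔
      ∃ Q ∈ G, ∃ L ∈ logicalPaulis s Z, M = L * Q ∨ M = -(L * Q) := by
  have hmM : IsPauli (m • M) := hMP.smul (by rcases hm with rfl | rfl <;> norm_num)
  have hmMH : (m • M).IsHermitian := by
    rcases hm with rfl | rfl
    exacts [by rwa [one_smul], by rw [neg_one_smul]; exact hMH.neg]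
  rw [F.pauliDichotomy_eigenProj_iff hGx hx hmM hmMH hne]
  rcases hm with rfl | rfl
  · simp only [one_smul]
  · simp only [neg_one_smul, neg_eq_iff_eq_neg, neg_neg, or_comm]

theorem stabilizer_purification_iff_logical_measurement_general {ψ x : QVec n} {s Z : QMat n}
    {G : Submonoid (QMat n)} (F : LogicalFrame ψ s Z G) (hGx : ∀ R ∈ G, R *ᵥ x = x)
    (hx : ¬ IsStabState (normalized x)) {M : QMat n} (hMP : IsPauli M) (hMH : M.IsHermitian)
    {m : ℂ} (hm : m = 1 ∨ m = -1) (hne : eigenProj (m • M) *ᵥ x ≠ 0) :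
    IsStabState (normalized (eigenProj (m • M) *ᵥ x)) ↔
      ∃ Q ∈ G, M = Z * Q ∨ M = -(Z * Q) ∨ M = s * Q ∨ M = -(s * Q) ∨
        M = Complex.I • (s * (Z * Q)) ∨ M = -(Complex.I • (s * (Z * Q))) := by
  have hx0 : x ≠ 0 := by
    rintro rfl
    exact hne (mulVec_zero _)
  rw [isStabState_normalized_iff hx0] at hx
  simp only [isStabState_normalized_iff hne, ← exists_mem_logicalPaulis_iff]
  exact F.pauliDichotomy_eigenProj_smul_iff hGx hx hMP hMH hm hne

end Criterion

/-- **Stabilizer purification criterion for a single `T` gate** (Sec. V A,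
App. B 2): with `ψ` a stabilizer state with independent generating set
`s_1 = g 0, g_2, …, g_n` (where `Z_1` anticommutes with `s_1` and commutes with
the `g_i`, `i ≥ 2`), `𝒢 = ⟨g_2,…,g_n⟩`, and `φ = T_1 ψ`, a Hermitian Pauli
measurement `M` with outcome `m = ±1` and projector `Π = (I + mM)/2`, `Πφ ≠ 0`,
yields a stabilizer post-measurement state `Πφ/‖Πφ‖` if and only if
`M ∈ ±Z_1𝒢 ∪ ±s_1𝒢 ∪ ±i s_1Z_1𝒢`. -/
theorem stabilizer_purification_iff_logical_measurement {n : ℕ} [NeZero n]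
    (ψ : QVec n) (hψ : IsStabState ψ)
    (g : Fin n → QMat n) (hg : IsIndepGenSet ψ g)
    (hanti : opAt (0 : Fin n) σZ * g 0 = -(g 0 * opAt (0 : Fin n) σZ))
    (hcomm : ∀ i : Fin n, i ≠ 0 →
      opAt (0 : Fin n) σZ * g i = g i * opAt (0 : Fin n) σZ)
    (M : QMat n) (hMP : IsPauli M) (hMH : M.IsHermitian)
    (m : ℂ) (hm : m = 1 ∨ m = -1)
    (hne : ((2 : ℂ)⁻¹ • ((1 : QMat n) + m • M)).mulVec
        ((opAt (0 : Fin n) Tgate).mulVec ψ) ≠ 0) :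
    IsStabState
        ((Real.sqrt (nrmSq (((2 : ℂ)⁻¹ • ((1 : QMat n) + m • M)).mulVec
            ((opAt (0 : Fin n) Tgate).mulVec ψ))))⁻¹ •
          ((2 : ℂ)⁻¹ • ((1 : QMat n) + m • M)).mulVec
            ((opAt (0 : Fin n) Tgate).mulVec ψ))
      ↔ ∃ Q ∈ Submonoid.closure {Q : QMat n | ∃ i : Fin n, i ≠ 0 ∧ Q = g i},
          M = opAt (0 : Fin n) σZ * Q ∨ M = -(opAt (0 : Fin n) σZ * Q) ∨
          M = g 0 * Q ∨ M = -(g 0 * Q) ∨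
          M = Complex.I • (g 0 * (opAt (0 : Fin n) σZ * Q)) ∨
          M = -(Complex.I • (g 0 * (opAt (0 : Fin n) σZ * Q))) := by
  have F := logicalFrame_of_isIndepGenSet hψ hg (isPauli_opAt 0 (.inr (.inr (.inr rfl))))
    (opAt_σZ_mul_self 0) hanti hcomm
  exact stabilizer_purification_iff_logical_measurement_general F
    (fun R hR => F.mulVec_opAt_diag _ hR) F.not_isStabState_normalized_opAt_Tgate_mulVec
    hMP hMH hm hne

end PaperFormal
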